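/- Let ω ⊆ ℝ^d be measurable, s₀ > 0, C₁ > 0, ρ₀ ∈ ℝ and C₀ > 0. Assume: (H1) for every admissible w and every s ≥ s₀, ∫_Q { (1/(sφ))( |∂_t w|² + Σ_{i,j}|∂_i∂_j w|² ) + sφ|∇w|² + s³φ³|w|² } e^{2sα} ≤ C₁ ∫_Q |∂_t w − Δw|² e^{2sα} + C₁ ∫_{ω×(0,T)} s³φ³|w|² e^{2sα}; and (H2) for every admissible w and every s ≥ s₀, ∫_Q { |∂_t w|² + Σ_{i,j}|∂_i∂_j w|² + s²φ²|∇w|² + s⁴φ⁴|w|² } e^{2sα} ≤ C₁ ∫_Q sφ |∂_t w + Δw|² e^{2sα} + C₁ ∫_{ω×(0,T)} s⁴φ⁴|w|² e^{2sα}. Then there exist constants C > 0 and s₁ ≥ s₀ such that for every s ≥ s₁, for all admissible u, v and all measurable F, G : Q → ℝ satisfying, for every (x,t) ∈ Q, |∂_t u + Δu − F| ≤ C₀(|u| + |∇u| + |v|) and |∂_t v − Δv − ρ₀Δu − G| ≤ C₀(|u| + |v| + |∇u| + |∇v|), one has ∫_Q { |∂_t u|² + Σ_{i,j}|∂_i∂_j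 u|² + s²φ²|∇u|² + s⁴φ⁴|u|² + (1/(sφ))( |∂_t v|² + Σ_{i,j}|∂_i∂_j v|² ) + sφ|∇v|² + s³φ³|v|² } e^{2sα} ≤ C ∫_Q ( sφ|F|² + |G|² ) e^{2sα} + C ∫_{ω×(0,T)} ( s⁴φ⁴|u|² + s³φ³|v|² ) e^{2sα}. -/

import Mathlib

open MeasureTheory Real Set

noncomputable section

/-- Spatial partial derivative of `f` in the `i`-th coordinate direction. -/
def spd {d : ℕ} (i : Fin d) (f : (Fin d → ℝ) → ℝ) (x : Fin d → ℝ) : ℝ :=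
  fderiv ℝ f x (Pi.single i 1)

/-- Time derivative `∂_t u`. -/
def tder {d : ℕ} (u : (Fin d → ℝ) → ℝ → ℝ) (x : Fin d → ℝ) (t : ℝ) : ℝ :=
  deriv (u x) t

/-- Squared norm of the spatial gradient, `|∇u|²`. -/
def grad2 {d : ℕ} (u : (Fin d → ℝ) → ℝ → ℝ) (x : Fin d → ℝ) (t : ℝ) : ℝ :=
  ∑ i : Fin d, (spd i (fun y => u y t) x) ^ 2

/-- Norm of the spatial gradient, `|∇u|`. -/
def gradNorm {d : ℕ} (u : (Fin d → ℝ) → ℝ → ℝ) (x : Fin d → ℝ) (t : ℝ) : ℝ :=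
  Real.sqrt (grad2 u x t)

/-- Second spatial partial derivative `∂_i ∂_j u`. -/
def pdij {d : ℕ} (i j : Fin d) (u : (Fin d → ℝ) → ℝ → ℝ) (x : Fin d → ℝ) (t : ℝ) : ℝ :=
  spd i (fun y => spd j (fun z => u z t) y) x

/-- Spatial Laplacian `Δu`. -/
def lap {d : ℕ} (u : (Fin d → ℝ) → ℝ → ℝ) (x : Fin d → ℝ) (t : ℝ) : ℝ :=
  ∑ i : Fin d, pdij i i u x t

/-- `Σ_{i,j=1}^d |∂_i∂_j u|²`. -/
def hess2 {d : ℕ} (u : (Fin d → ℝ) → ℝ → ℝ) (x : Fin d → ℝ) (t : ℝ) : ℝ :=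
  ∑ i : Fin d, ∑ j : Fin d, (pdij i j u x t) ^ 2

/-- `u : ℝ^d × ℝ → ℝ` is admissible: `C^∞` and spatially compactly supported,
uniformly for `t ∈ [0,T]`. -/
def Admissible {d : ℕ} (T : ℝ) (u : (Fin d → ℝ) → ℝ → ℝ) : Prop :=
  ContDiff ℝ (⊤ : ℕ∞) (fun p : (Fin d → ℝ) × ℝ => u p.1 p.2) ∧
  ∃ K₀ : Set (Fin d → ℝ), IsCompact K₀ ∧
    ∀ x t, x ∉ K₀ → t ∈ Set.Icc (0 : ℝ) T → u x t = 0

end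

/-!
For large `s` the quantity `σ = sφ` is large on all of `ℝᵈ × (0, T)`, uniformly in `x` and `t`.
Apply the backward estimate to `u` and the forward estimate to `v`, and bound the sources they
produce through the two equations. The lower order couplings carry fewer powers of `σ` than the
left hand sides, so they cost only `δ ~ 1/σ` times these. The term `ρ₀Δu` gains no such factor, but
the backward estimate controls `|∂ᵢ∂ⱼu|²` with weight one: adding a large multiple of the estimate
for `u` to the estimate for `v` absorbs it. All integrals converge because `σᵏ e^{2sα}` is bounded,
`-α` being at least a multiple of `φ`.
-/

section Slab

variable {X : Type*} [MeasurableSpace X]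

/-- The product of a measure in space and Lebesgue measure in time on the slab `X × (0, T)`. Taking
the restriction of Lebesgue measure to `ω` in space gives the observation region `ω × (0, T)`. -/
noncomputable def slabMeasure (T : ℝ) (μ : Measure X) : Measure (X × ℝ) :=
  μ.prod (volume.restrict (Ioo 0 T))

theorem ae_slabMeasure_of_forall {T : ℝ} {μ : Measure X} {P : X × ℝ → Prop}
    (h : ∀ x, ∀ t ∈ Ioo 0 T, P (x, t)) : ∀ᵐ p ∂slabMeasure T μ, P p := by
  filter_upwards [Measure.quasiMeasurePreserving_snd.ae (ae_restrict_mem measurableSet_Ioo)]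
    with p hp using h p.1 p.2 hp

theorem memLp_slabMeasure_of_continuous [TopologicalSpace X] [T2Space X]
    [SecondCountableTopology X] [BorelSpace X] {E : Type*} [NormedAddCommGroup E]
    {T : ℝ} {μ : Measure X} [SFinite μ] [IsFiniteMeasureOnCompacts μ] {f : X × ℝ → E}
    (hf : Continuous f) {K : Set X} (hK : IsCompact K)
    (hfK : ∀ x, ∀ t ∈ Ioo 0 T, x ∉ K → f (x, t) = 0) (p : ENNReal) :
    MemLp f p (slabMeasure T μ) := by
  obtain ⟨B, hB⟩ :=
    (hK.prod (isCompact_Icc (a := 0) (b := T))).exists_bound_of_continuousOn hf.continuousOn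
  have hKm : MeasurableSet (K ×ˢ (univ : Set ℝ)) := hK.measurableSet.prod .univ
  have h_ind : (K ×ˢ univ).indicator f =ᵐ[slabMeasure T μ] f :=
    ae_slabMeasure_of_forall fun x t ht => by
      by_cases hx : x ∈ K <;> simp [hx, hfK x t ht]
  refine MemLp.ae_eq h_ind ((memLp_indicator_iff_restrict hKm).2 ?_)
  have h_restrict : (slabMeasure T μ).restrict (K ×ˢ univ) = slabMeasure T (μ.restrict K) := by
    simp only [slabMeasure, ← Measure.prod_restrict, Measure.restrict_univ]
  have : IsFiniteMeasure (μ.restrict K) := isFiniteMeasure_restrict.2 hK.measure_lt_top.ne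
  have : IsFiniteMeasure (slabMeasure T (μ.restrict K)) := by
    unfold slabMeasure; infer_instance
  have h_mem : ∀ᵐ p ∂(slabMeasure T μ).restrict (K ×ˢ univ), p ∈ K ×ˢ (univ : Set ℝ) :=
    ae_restrict_mem hKm
  rw [h_restrict] at h_mem ⊢
  have h_Ioo : ∀ᵐ p ∂slabMeasure T (μ.restrict K), p.2 ∈ Ioo 0 T :=
    ae_slabMeasure_of_forall fun _ _ ht => ht
  refine .of_bound hf.aestronglyMeasurable B ?_
  filter_upwards [h_mem, h_Ioo] with p hpK hpT using hB p ⟨hpK.1, Ioo_subset_Icc_self hpT⟩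

theorem memLp_of_norm_sub_le {Y E : Type*} [MeasurableSpace Y] [NormedAddCommGroup E]
    {μ : Measure Y} {p : ENNReal} {f F : Y → E} {g : Y → ℝ} (hf : MemLp f p μ) (hg : MemLp g p μ)
    (hF : AEStronglyMeasurable F μ) (h : ∀ᵐ y ∂μ, ‖f y - F y‖ ≤ g y) : MemLp F p μ := by
  simpa using hf.sub (hg.mono' (hf.aestronglyMeasurable.sub hF) h)

/-- The weighted integral `∫ f e^{2sα}` over the slab `X × (0, T)`, iterated with space inside. -/
noncomputable def weightedIntegral (T : ℝ) (μ : Measure X) (s : ℝ) (α f : X → ℝ → ℝ) : ℝ :=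
  ∫ t in Ioo 0 T, ∫ x, f x t * exp (2 * s * α x t) ∂μ

/-- Integrability of `f e^{2sα}` over the slab `X × (0, T)`, with respect to the product measure;
`weightedIntegral` takes a junk value without it. -/
def WeightedIntegrable (T : ℝ) (μ : Measure X) (s : ℝ) (α f : X → ℝ → ℝ) : Prop :=
  Integrable (fun p : X × ℝ => f p.1 p.2 * exp (2 * s * α p.1 p.2)) (slabMeasure T μ)

variable {T s : ℝ} {μ : Measure X} {α f g : X → ℝ → ℝ}

theorem WeightedIntegrable.add (hf : WeightedIntegrable T μ s α f)
    (hg : WeightedIntegrable T μ s α g) :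
    WeightedIntegrable T μ s α (fun x t => f x t + g x t) := by
  simpa only [WeightedIntegrable, add_mul] using Integrable.fun_add hf hg

theorem WeightedIntegrable.const_mul (hf : WeightedIntegrable T μ s α f) (c : ℝ) :
    WeightedIntegrable T μ s α (fun x t => c * f x t) := by
  simpa only [WeightedIntegrable, mul_assoc] using Integrable.const_mul hf c

theorem weightedIntegral_const_mul (c : ℝ) :
    weightedIntegral T μ s α (fun x t => c * f x t) = c * weightedIntegral T μ s α f := by
  simp only [weightedIntegral, mul_assoc, integral_const_mul]

theorem weightedIntegral_nonneg (hf : ∀ x, ∀ t ∈ Ioo 0 T, 0 ≤ f x t) :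
    0 ≤ weightedIntegral T μ s α f :=
  setIntegral_nonneg measurableSet_Ioo fun t ht =>
    integral_nonneg fun x => mul_nonneg (hf x t ht) (exp_pos _).le

variable [SFinite μ]

theorem weightedIntegral_eq_integral (hf : WeightedIntegrable T μ s α f) :
    weightedIntegral T μ s α f =
      ∫ p, f p.1 p.2 * exp (2 * s * α p.1 p.2) ∂slabMeasure T μ :=
  (integral_prod_symm _ hf).symm

theorem weightedIntegral_add (hf : WeightedIntegrable T μ s α f)
    (hg : WeightedIntegrable T μ s α g) :
    weightedIntegral T μ s α (fun x t => f x t + g x t) =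
      weightedIntegral T μ s α f + weightedIntegral T μ s α g := by
  rw [weightedIntegral_eq_integral hf, weightedIntegral_eq_integral hg,
    weightedIntegral_eq_integral (hf.add hg)]
  simpa only [add_mul] using integral_add hf hg

theorem weightedIntegral_mono_of_nonneg (hg : WeightedIntegrable T μ s α g)
    (hf : ∀ x, ∀ t ∈ Ioo 0 T, 0 ≤ f x t) (hfg : ∀ x, ∀ t ∈ Ioo 0 T, f x t ≤ g x t) :
    weightedIntegral T μ s α f ≤ weightedIntegral T μ s α g := by
  have h_nonneg : ∀ t ∈ Ioo 0 T, ∀ x, 0 ≤ f x t * exp (2 * s * α x t) := fun t ht x =>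
    mul_nonneg (hf x t ht) (exp_pos _).le
  refine integral_mono_of_nonneg ?_ (Integrable.integral_prod_right hg) ?_
  · filter_upwards [ae_restrict_mem measurableSet_Ioo] with t ht
      using integral_nonneg (h_nonneg t ht)
  · filter_upwards [Integrable.prod_left_ae hg, ae_restrict_mem measurableSet_Ioo] with t hgt ht
    exact integral_mono_of_nonneg (.of_forall (h_nonneg t ht)) hgt
      (.of_forall fun x => mul_le_mul_of_nonneg_right (hfg x t ht) (exp_pos _).le)

end Slab

section Weight

variable {X : Type*} [MeasurableSpace X]

/-- An abstract Carleman weight pair on `X × (0, T)`: the factor `φ` is bounded below by `m > 0`,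
and the exponent `α` lies below `-κφ` with `κ > 0`, so that `e^{2sα}` beats every power of `sφ`. -/
structure IsCarlemanWeight (T m κ : ℝ) (φ α : X → ℝ → ℝ) : Prop where
  measurable_factor : Measurable fun p : X × ℝ => φ p.1 p.2
  measurable_exponent : Measurable fun p : X × ℝ => α p.1 p.2
  lowerBound_pos : 0 < m
  rate_pos : 0 < κ
  lowerBound_le : ∀ x, ∀ t ∈ Ioo 0 T, m ≤ φ x t
  exponent_le : ∀ x, ∀ t ∈ Ioo 0 T, α x t ≤ -(κ * φ x t)

theorem isCarlemanWeight_exp_div {T lam K : ℝ} (hT : 0 < T) (hlam : 0 < lam) (hK : 0 < K)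
    {η : X → ℝ} (hη : Measurable η) (hη0 : ∀ x, 0 ≤ η x) (hηK : ∀ x, η x ≤ K) :
    IsCarlemanWeight T (4 / T ^ 2) (exp (lam * K) - 1)
      (fun x t => exp (lam * η x) / (t * (T - t)))
      (fun x t => (exp (lam * η x) - exp (2 * lam * K)) / (t * (T - t))) where
  measurable_factor := by fun_prop
  measurable_exponent := by fun_prop
  lowerBound_pos := by positivity
  rate_pos := sub_pos.2 (one_lt_exp_iff.2 (mul_pos hlam hK))
  lowerBound_le x t ht := by
    have h_time : 0 < t * (T - t) := mul_pos ht.1 (sub_pos.2 ht.2)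
    have h_exp : 1 ≤ exp (lam * η x) := one_le_exp (mul_nonneg hlam.le (hη0 x))
    rw [div_le_div_iff₀ (by positivity) h_time]
    nlinarith [sq_nonneg (T - 2 * t), sq_nonneg T]
  exponent_le x t ht := by
    have h_time : 0 < t * (T - t) := mul_pos ht.1 (sub_pos.2 ht.2)
    have h_exp : exp (lam * η x) ≤ exp (lam * K) :=
      exp_le_exp.2 (mul_le_mul_of_nonneg_left (hηK x) hlam.le)
    have h_sq : exp (2 * lam * K) = exp (lam * K) * exp (lam * K) := by
      rw [← exp_add]; ring_nf
    rw [← mul_div_assoc, ← neg_div]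
    refine div_le_div_of_nonneg_right ?_ h_time.le
    nlinarith [exp_pos (lam * K)]

theorem pow_mul_exp_neg_mul_le {κ y : ℝ} (hκ : 0 < κ) (hy : 0 ≤ y) (k : ℕ) :
    y ^ k * exp (-(κ * y)) ≤ k.factorial / κ ^ k := by
  have h := pow_div_factorial_le_exp (κ * y) (by positivity) k
  rw [div_le_iff₀ (by positivity), mul_pow] at h
  rw [exp_neg, ← div_eq_mul_inv, div_le_div_iff₀ (exp_pos _) (by positivity)]
  linarith

namespace IsCarlemanWeight

variable {T m κ s : ℝ} {φ α : X → ℝ → ℝ}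

theorem factor_pos (hw : IsCarlemanWeight T m κ φ α) {x : X} {t : ℝ} (ht : t ∈ Ioo 0 T) :
    0 < φ x t :=
  hw.lowerBound_pos.trans_le (hw.lowerBound_le x t ht)

theorem two_mul_exponent_le (hw : IsCarlemanWeight T m κ φ α) (hs : 0 < s) {x : X} {t : ℝ}
    (ht : t ∈ Ioo 0 T) : 2 * s * α x t ≤ -(2 * κ * (s * φ x t)) := by
  nlinarith [hw.exponent_le x t ht]

theorem weightedIntegrable_pow_mul (hw : IsCarlemanWeight T m κ φ α) (hs : 0 < s) {μ : Measure X}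
    {g : X → ℝ → ℝ} (hg : Integrable (fun p : X × ℝ => g p.1 p.2) (slabMeasure T μ)) (k : ℕ) :
    WeightedIntegrable T μ s α (fun x t => s ^ k * φ x t ^ k * g x t) := by
  have h_meas : Measurable fun p : X × ℝ => (s * φ p.1 p.2) ^ k * exp (2 * s * α p.1 p.2) := by
    have := hw.measurable_factor
    have := hw.measurable_exponent
    fun_prop
  have h_bound : ∀ x, ∀ t ∈ Ioo 0 T,
      ‖(s * φ x t) ^ k * exp (2 * s * α x t)‖ ≤ k.factorial / (2 * κ) ^ k := fun x t ht => by
    have h_pos : 0 < s * φ x t := mul_pos hs (hw.factor_pos ht)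
    rw [norm_of_nonneg (by positivity)]
    calc (s * φ x t) ^ k * exp (2 * s * α x t)
        ≤ (s * φ x t) ^ k * exp (-(2 * κ * (s * φ x t))) := by
          gcongr; exact hw.two_mul_exponent_le hs ht
      _ ≤ k.factorial / (2 * κ) ^ k :=
          pow_mul_exp_neg_mul_le (mul_pos two_pos hw.rate_pos) h_pos.le k
  refine (hg.bdd_mul h_meas.aestronglyMeasurable (ae_slabMeasure_of_forall h_bound)).congr
    (.of_forall fun p => ?_)
  simp only
  ring

theorem weightedIntegrable_one_div_mul (hw : IsCarlemanWeight T m κ φ α) (hs : 0 < s)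
    {μ : Measure X} {g : X → ℝ → ℝ}
    (hg : Integrable (fun p : X × ℝ => g p.1 p.2) (slabMeasure T μ)) :
    WeightedIntegrable T μ s α (fun x t => 1 / (s * φ x t) * g x t) := by
  have h_meas : Measurable fun p : X × ℝ => 1 / (s * φ p.1 p.2) := by
    have := hw.measurable_factor
    fun_prop
  have h_bound : ∀ x, ∀ t ∈ Ioo 0 T, ‖1 / (s * φ x t)‖ ≤ 1 / (s * m) := fun x t ht => by
    have h_pos := hw.factor_pos (x := x) ht
    have h_m := hw.lowerBound_pos
    rw [norm_of_nonneg (by positivity)]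
    gcongr
    exact hw.lowerBound_le x t ht
  have h_int := hg.bdd_mul h_meas.aestronglyMeasurable (ae_slabMeasure_of_forall h_bound)
  simpa only [pow_zero, one_mul] using
    hw.weightedIntegrable_pow_mul (g := fun x t => 1 / (s * φ x t) * g x t) hs h_int 0

end IsCarlemanWeight

end Weight

section Pointwise

variable {d : ℕ} (u : (Fin d → ℝ) → ℝ → ℝ) (x : Fin d → ℝ) (t : ℝ)

theorem grad2_nonneg : 0 ≤ grad2 u x t :=
  Finset.sum_nonneg fun _ _ => sq_nonneg _

theorem gradNorm_sq : gradNorm u x t ^ 2 = grad2 u x t :=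
  sq_sqrt (grad2_nonneg u x t)

theorem abs_gradNorm : |gradNorm u x t| = gradNorm u x t :=
  abs_of_nonneg (sqrt_nonneg _)

theorem hess2_nonneg : 0 ≤ hess2 u x t :=
  Finset.sum_nonneg fun _ _ => Finset.sum_nonneg fun _ _ => sq_nonneg _

theorem lap_sq_le : lap u x t ^ 2 ≤ d * hess2 u x t := by
  calc lap u x t ^ 2
      ≤ d * ∑ i, pdij i i u x t ^ 2 := by
        simpa [lap] using
          sq_sum_le_card_mul_sum_sq (s := Finset.univ) (f := fun i => pdij i i u x t)
    _ ≤ d * hess2 u x t := by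
        refine mul_le_mul_of_nonneg_left (Finset.sum_le_sum fun i _ => ?_) d.cast_nonneg
        exact Finset.single_le_sum (f := fun j => pdij i j u x t ^ 2) (fun _ _ => sq_nonneg _)
          (Finset.mem_univ i)

end Pointwise

section Admissible

variable {d : ℕ} {T : ℝ} {u : (Fin d → ℝ) → ℝ → ℝ}

theorem Admissible.partialDeriv (hu : Admissible T u) (i : Fin d) :
    Admissible T (fun x t => spd i (fun y => u y t) x) := by
  obtain ⟨h_smooth, K₀, hK₀, h_zero⟩ := hu
  refine ⟨?_, K₀, hK₀, fun x t hx ht => ?_⟩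
  · refine ContDiff.fderiv_apply (m := (⊤ : ℕ∞))
      (f := fun (p : (Fin d → ℝ) × ℝ) y => u y p.2) (g := Prod.fst) (k := fun _ => Pi.single i 1)
      ?_ contDiff_fst contDiff_const (by simp)
    exact h_smooth.comp (contDiff_snd.prodMk (contDiff_snd.comp contDiff_fst))
  · have h_eq : (fun y => u y t) =ᶠ[nhds x] fun _ => 0 := by
      filter_upwards [hK₀.isClosed.isOpen_compl.mem_nhds hx] with y hy using h_zero y t hy ht
    simp [spd, h_eq.fderiv_eq]

theorem Admissible.continuous_tder (hu : Admissible T u) :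
    Continuous fun p : (Fin d → ℝ) × ℝ => tder u p.1 p.2 := by
  simp only [tder, ← fderiv_apply_one_eq_deriv]
  refine (ContDiff.fderiv_apply (n := 0) (m := (⊤ : ℕ∞))
    (f := fun (p : (Fin d → ℝ) × ℝ) r => u p.1 r) (g := Prod.snd) (k := fun _ => 1)
    ?_ contDiff_snd contDiff_const (by simp)).continuous
  exact hu.1.comp ((contDiff_fst.comp contDiff_fst).prodMk contDiff_snd)

variable {μ : Measure (Fin d → ℝ)} [SFinite μ] [IsFiniteMeasureOnCompacts μ]

theorem Admissible.memLp (hu : Admissible T u) (p : ENNReal) :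
    MemLp (fun q : (Fin d → ℝ) × ℝ => u q.1 q.2) p (slabMeasure T μ) := by
  obtain ⟨h_smooth, K₀, hK₀, h_zero⟩ := hu
  exact memLp_slabMeasure_of_continuous h_smooth.continuous hK₀
    (fun x t ht hx => h_zero x t hx (Ioo_subset_Icc_self ht)) p

theorem Admissible.memLp_tder (hu : Admissible T u) (p : ENNReal) :
    MemLp (fun q : (Fin d → ℝ) × ℝ => tder u q.1 q.2) p (slabMeasure T μ) := by
  obtain ⟨K₀, hK₀, h_zero⟩ := hu.2
  refine memLp_slabMeasure_of_continuous hu.continuous_tder hK₀ (fun x t ht hx => ?_) p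
  have h_eq : u x =ᶠ[nhds t] fun _ => 0 := by
    filter_upwards [Ioo_mem_nhds ht.1 ht.2] with r hr using h_zero x r hx (Ioo_subset_Icc_self hr)
  simp [tder, h_eq.deriv_eq]

theorem Admissible.memLp_pdij (hu : Admissible T u) (i j : Fin d) (p : ENNReal) :
    MemLp (fun q : (Fin d → ℝ) × ℝ => pdij i j u q.1 q.2) p (slabMeasure T μ) :=
  ((hu.partialDeriv j).partialDeriv i).memLp p

theorem Admissible.memLp_lap (hu : Admissible T u) (p : ENNReal) :
    MemLp (fun q : (Fin d → ℝ) × ℝ => lap u q.1 q.2) p (slabMeasure T μ) :=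
  memLp_finsetSum _ fun i _ => hu.memLp_pdij i i p

theorem Admissible.integrable_grad2 (hu : Admissible T u) :
    Integrable (fun p : (Fin d → ℝ) × ℝ => grad2 u p.1 p.2) (slabMeasure T μ) :=
  integrable_finsetSum _ fun i _ => ((hu.partialDeriv i).memLp 2).integrable_sq

theorem Admissible.integrable_hess2 (hu : Admissible T u) :
    Integrable (fun p : (Fin d → ℝ) × ℝ => hess2 u p.1 p.2) (slabMeasure T μ) :=
  integrable_finsetSum _ fun i _ => integrable_finsetSum _ fun j _ =>
    (hu.memLp_pdij i j 2).integrable_sq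

theorem Admissible.memLp_gradNorm (hu : Admissible T u) :
    MemLp (fun p : (Fin d → ℝ) × ℝ => gradNorm u p.1 p.2) 2 (slabMeasure T μ) := by
  have h_meas : AEStronglyMeasurable (fun p : (Fin d → ℝ) × ℝ => gradNorm u p.1 p.2)
      (slabMeasure T μ) :=
    continuous_sqrt.comp_aestronglyMeasurable hu.integrable_grad2.aestronglyMeasurable
  rw [memLp_two_iff_integrable_sq h_meas]
  simpa only [gradNorm_sq] using hu.integrable_grad2

end Admissible

section Density

variable {d : ℕ}

/-- The integrand controlled by the Carleman estimate for the forward operator `∂ₜ - Δ`, without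
the factor `e^{2sα}`. -/
noncomputable def forwardDensity (s : ℝ) (φ w : (Fin d → ℝ) → ℝ → ℝ) (x : Fin d → ℝ) (t : ℝ) : ℝ :=
  (1 / (s * φ x t)) * (tder w x t ^ 2 + hess2 w x t)
    + s * φ x t * grad2 w x t + s ^ 3 * φ x t ^ 3 * w x t ^ 2

/-- The integrand controlled by the Carleman estimate for the backward operator `∂ₜ + Δ`, without
the factor `e^{2sα}`: one power of `sφ` above `forwardDensity`. -/
noncomputable def backwardDensity (s : ℝ) (φ w : (Fin d → ℝ) → ℝ → ℝ) (x : Fin d → ℝ) (t : ℝ) : ℝ :=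
  tder w x t ^ 2 + hess2 w x t
    + s ^ 2 * φ x t ^ 2 * grad2 w x t + s ^ 4 * φ x t ^ 4 * w x t ^ 2

variable {s : ℝ} {φ : (Fin d → ℝ) → ℝ → ℝ} {x : Fin d → ℝ} {t : ℝ}

theorem forwardDensity_nonneg (w : (Fin d → ℝ) → ℝ → ℝ) (hσ : 0 < s * φ x t) :
    0 ≤ forwardDensity s φ w x t := by
  have h_grad := grad2_nonneg w x t
  have h_hess := hess2_nonneg w x t
  simp only [forwardDensity, ← mul_pow]
  positivity

theorem backwardDensity_nonneg (w : (Fin d → ℝ) → ℝ → ℝ) : 0 ≤ backwardDensity s φ w x t := by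
  have h_grad := grad2_nonneg w x t
  have h_hess := hess2_nonneg w x t
  unfold backwardDensity
  positivity

theorem hess2_le_backwardDensity (w : (Fin d → ℝ) → ℝ → ℝ) :
    hess2 w x t ≤ backwardDensity s φ w x t := by
  have h_grad : 0 ≤ s ^ 2 * φ x t ^ 2 * grad2 w x t :=
    mul_nonneg (by positivity) (grad2_nonneg w x t)
  have h_val : 0 ≤ s ^ 4 * φ x t ^ 4 * w x t ^ 2 := by positivity
  unfold backwardDensity
  linarith [sq_nonneg (tder w x t)]

theorem lowerOrder_le_backwardDensity_add_forwardDensity (u v : (Fin d → ℝ) → ℝ → ℝ)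
    (hσ : 0 < s * φ x t) :
    (s * φ x t) ^ 4 * u x t ^ 2 + (s * φ x t) ^ 2 * grad2 u x t + (s * φ x t) ^ 3 * v x t ^ 2
      + s * φ x t * grad2 v x t ≤ backwardDensity s φ u x t + forwardDensity s φ v x t := by
  have h_fwd : 0 ≤ (1 / (s * φ x t)) * (tder v x t ^ 2 + hess2 v x t) :=
    mul_nonneg (by positivity) (add_nonneg (sq_nonneg _) (hess2_nonneg v x t))
  have h_bwd : 0 ≤ tder u x t ^ 2 + hess2 u x t :=
    add_nonneg (sq_nonneg _) (hess2_nonneg u x t)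
  simp only [mul_pow, backwardDensity, forwardDensity]
  linarith

theorem mul_backward_lowerOrder_le {R : ℝ} (u v : (Fin d → ℝ) → ℝ → ℝ) (hR : 1 ≤ R)
    (hσ : R ≤ s * φ x t) :
    R * (s * φ x t * (u x t ^ 2 + grad2 u x t + v x t ^ 2)) ≤
      backwardDensity s φ u x t + forwardDensity s φ v x t := by
  refine le_trans ?_
    (lowerOrder_le_backwardDensity_add_forwardDensity u v (by linarith))
  set σ := s * φ x t
  have h_one : 1 ≤ σ := hR.trans hσ
  have h_grad_u := grad2_nonneg u x t
  have h_grad_v := grad2_nonneg v x t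
  calc R * (σ * (u x t ^ 2 + grad2 u x t + v x t ^ 2))
      ≤ σ * (σ * (u x t ^ 2 + grad2 u x t + v x t ^ 2)) := by gcongr
    _ = σ ^ 2 * u x t ^ 2 + σ ^ 2 * grad2 u x t + σ ^ 2 * v x t ^ 2 := by ring
    _ ≤ σ ^ 4 * u x t ^ 2 + σ ^ 2 * grad2 u x t + σ ^ 3 * v x t ^ 2 + σ * grad2 v x t := by
        refine le_add_of_le_of_nonneg ?_ (by positivity)
        gcongr <;> norm_num

theorem mul_forward_lowerOrder_le {R : ℝ} (u v : (Fin d → ℝ) → ℝ → ℝ) (hR : 1 ≤ R)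
    (hσ : R ≤ s * φ x t) :
    R * (u x t ^ 2 + grad2 u x t + v x t ^ 2 + grad2 v x t) ≤
      backwardDensity s φ u x t + forwardDensity s φ v x t := by
  refine le_trans ?_
    (lowerOrder_le_backwardDensity_add_forwardDensity u v (by linarith))
  set σ := s * φ x t
  have h_one : 1 ≤ σ := hR.trans hσ
  have h_grad_u := grad2_nonneg u x t
  have h_grad_v := grad2_nonneg v x t
  calc R * (u x t ^ 2 + grad2 u x t + v x t ^ 2 + grad2 v x t)
      ≤ σ * (u x t ^ 2 + grad2 u x t + v x t ^ 2 + grad2 v x t) := by gcongr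
    _ = σ * u x t ^ 2 + σ * grad2 u x t + σ * v x t ^ 2 + σ * grad2 v x t := by ring
    _ ≤ σ ^ 4 * u x t ^ 2 + σ ^ 2 * grad2 u x t + σ ^ 3 * v x t ^ 2 + σ * grad2 v x t := by
        gcongr <;> exact le_self_pow₀ h_one (by norm_num)

end Density

section Estimate

variable {d : ℕ}

/-- The Carleman estimate for `∂ₜ - Δ` with observation measure `ν` in space, hypothesis (H1) when
`ν` is Lebesgue measure on `ω`. -/
def ForwardCarlemanEstimate (T s₀ C₁ : ℝ) (φ α : (Fin d → ℝ) → ℝ → ℝ)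
    (ν : Measure (Fin d → ℝ)) : Prop :=
  ∀ w : (Fin d → ℝ) → ℝ → ℝ, Admissible T w → ∀ s ≥ s₀,
    weightedIntegral T volume s α (forwardDensity s φ w) ≤
      C₁ * weightedIntegral T volume s α (fun x t => (tder w x t - lap w x t) ^ 2) +
      C₁ * weightedIntegral T ν s α (fun x t => s ^ 3 * φ x t ^ 3 * w x t ^ 2)

/-- The Carleman estimate for `∂ₜ + Δ` with observation measure `ν` in space, hypothesis (H2) when
`ν` is Lebesgue measure on `ω`. -/
def BackwardCarlemanEstimate (T s₀ C₁ : ℝ) (φ α : (Fin d → ℝ) → ℝ → ℝ)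
    (ν : Measure (Fin d → ℝ)) : Prop :=
  ∀ w : (Fin d → ℝ) → ℝ → ℝ, Admissible T w → ∀ s ≥ s₀,
    weightedIntegral T volume s α (backwardDensity s φ w) ≤
      C₁ * weightedIntegral T volume s α (fun x t => s * φ x t * (tder w x t + lap w x t) ^ 2) +
      C₁ * weightedIntegral T ν s α (fun x t => s ^ 4 * φ x t ^ 4 * w x t ^ 2)

/-- The linearized mean field game system with sources `F` and `G`, as a pair of differential
inequalities on the slab: the lower order coefficients enter only through their bound `C₀`. -/
structure IsLinearizedMFGPair (T C₀ ρ₀ : ℝ) (u v F G : (Fin d → ℝ) → ℝ → ℝ) : Prop where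
  measurable_backwardSource : Measurable fun p : (Fin d → ℝ) × ℝ => F p.1 p.2
  measurable_forwardSource : Measurable fun p : (Fin d → ℝ) × ℝ => G p.1 p.2
  backward : ∀ x, ∀ t ∈ Ioo 0 T,
    |tder u x t + lap u x t - F x t| ≤ C₀ * (|u x t| + gradNorm u x t + |v x t|)
  forward : ∀ x, ∀ t ∈ Ioo 0 T,
    |tder v x t - lap v x t - ρ₀ * lap u x t - G x t| ≤
      C₀ * (|u x t| + |v x t| + gradNorm u x t + gradNorm v x t)

theorem sq_le_of_abs_sub_le_mul_sum_abs {a b C y₁ y₂ y₃ y₄ : ℝ}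
    (h : |a - b| ≤ C * (|y₁| + |y₂| + |y₃| + |y₄|)) :
    a ^ 2 ≤ 2 * b ^ 2 + 8 * C ^ 2 * (y₁ ^ 2 + y₂ ^ 2 + y₃ ^ 2 + y₄ ^ 2) := by
  have h_sum : (|y₁| + |y₂| + |y₃| + |y₄|) ^ 2 ≤ 4 * (y₁ ^ 2 + y₂ ^ 2 + y₃ ^ 2 + y₄ ^ 2) := by
    simpa [Fin.sum_univ_four] using
      sq_sum_le_card_mul_sum_sq (s := Finset.univ) (f := ![|y₁|, |y₂|, |y₃|, |y₄|])
  calc a ^ 2 = (b + (a - b)) ^ 2 := by ring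
    _ ≤ 2 * (b ^ 2 + (a - b) ^ 2) := add_sq_le
    _ ≤ 2 * (b ^ 2 + (C * (|y₁| + |y₂| + |y₃| + |y₄|)) ^ 2) := by
        rw [← sq_abs (a - b)]; gcongr
    _ = 2 * b ^ 2 + 2 * C ^ 2 * (|y₁| + |y₂| + |y₃| + |y₄|) ^ 2 := by ring
    _ ≤ 2 * b ^ 2 + 2 * C ^ 2 * (4 * (y₁ ^ 2 + y₂ ^ 2 + y₃ ^ 2 + y₄ ^ 2)) := by gcongr
    _ = 2 * b ^ 2 + 8 * C ^ 2 * (y₁ ^ 2 + y₂ ^ 2 + y₃ ^ 2 + y₄ ^ 2) := by ring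

theorem add_le_of_weak_coupling {I J a b C M δ : ℝ} (hC : 0 ≤ C) (hM : 0 ≤ M) (hIJ : 0 ≤ I + J)
    (hI : I ≤ C * (a + δ * (I + J))) (hJ : J ≤ C * (b + M * I + δ * (I + J)))
    (hδ : C * (2 + C * M) * δ ≤ 1 / 2) : I + J ≤ 2 * C * ((1 + C * M) * a + b) := by
  have h_sum : I + J ≤ C * ((1 + C * M) * a + b) + C * (2 + C * M) * δ * (I + J) := by
    have h_scaled := mul_le_mul_of_nonneg_left hI (by positivity : 0 ≤ 1 + C * M)
    linarith
  linarith [mul_le_mul_of_nonneg_right hδ hIJ]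

variable {T m κ s s₀ C₀ C₁ ρ₀ R : ℝ} {φ α : (Fin d → ℝ) → ℝ → ℝ} {ν : Measure (Fin d → ℝ)}
  {u v F G : (Fin d → ℝ) → ℝ → ℝ}

namespace IsLinearizedMFGPair

theorem backward_sq_le (h : IsLinearizedMFGPair T C₀ ρ₀ u v F G) (hR : 1 ≤ R) {x : Fin d → ℝ}
    {t : ℝ} (ht : t ∈ Ioo 0 T) (hσ : R ≤ s * φ x t) :
    s * φ x t * (tder u x t + lap u x t) ^ 2 ≤ 2 * (s * φ x t * F x t ^ 2) +
      8 * C₀ ^ 2 / R * (backwardDensity s φ u x t + forwardDensity s φ v x t) := by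
  have h_sq : (tder u x t + lap u x t) ^ 2 ≤
      2 * F x t ^ 2 + 8 * C₀ ^ 2 * (u x t ^ 2 + grad2 u x t + v x t ^ 2) := by
    simpa [gradNorm_sq, abs_gradNorm] using
      sq_le_of_abs_sub_le_mul_sum_abs (y₂ := gradNorm u x t) (y₄ := 0)
        (by simpa [abs_gradNorm] using h.backward x t ht)
  have h_low := mul_backward_lowerOrder_le u v hR hσ
  rw [← le_div_iff₀' (by linarith)] at h_low
  set J := backwardDensity s φ u x t + forwardDensity s φ v x t
  calc s * φ x t * (tder u x t + lap u x t) ^ 2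
      ≤ s * φ x t * (2 * F x t ^ 2 + 8 * C₀ ^ 2 * (u x t ^ 2 + grad2 u x t + v x t ^ 2)) :=
        mul_le_mul_of_nonneg_left h_sq (by linarith)
    _ = 2 * (s * φ x t * F x t ^ 2) +
          8 * C₀ ^ 2 * (s * φ x t * (u x t ^ 2 + grad2 u x t + v x t ^ 2)) := by ring
    _ ≤ 2 * (s * φ x t * F x t ^ 2) + 8 * C₀ ^ 2 * (J / R) := by gcongr
    _ = 2 * (s * φ x t * F x t ^ 2) + 8 * C₀ ^ 2 / R * J := by ring

theorem forward_sq_le (h : IsLinearizedMFGPair T C₀ ρ₀ u v F G) (hR : 1 ≤ R) {x : Fin d → ℝ}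
    {t : ℝ} (ht : t ∈ Ioo 0 T) (hσ : R ≤ s * φ x t) :
    (tder v x t - lap v x t) ^ 2 ≤
      4 * G x t ^ 2 + 4 * ρ₀ ^ 2 * d * backwardDensity s φ u x t +
        8 * C₀ ^ 2 / R * (backwardDensity s φ u x t + forwardDensity s φ v x t) := by
  have h_sq : (tder v x t - lap v x t) ^ 2 ≤ 2 * (ρ₀ * lap u x t + G x t) ^ 2 +
      8 * C₀ ^ 2 * (u x t ^ 2 + grad2 u x t + v x t ^ 2 + grad2 v x t) := by
    rw [← gradNorm_sq, ← gradNorm_sq]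
    refine sq_le_of_abs_sub_le_mul_sum_abs ((h.forward x t ht).trans' ?_ |>.trans ?_)
    · rw [sub_sub (tder v x t - lap v x t)]
    · rw [abs_gradNorm, abs_gradNorm, add_right_comm |u x t|]
  have h_lap : lap u x t ^ 2 ≤ d * backwardDensity s φ u x t :=
    (lap_sq_le u x t).trans (by gcongr; exact hess2_le_backwardDensity u)
  have h_low := mul_forward_lowerOrder_le u v hR hσ
  rw [← le_div_iff₀' (by linarith)] at h_low
  set J := backwardDensity s φ u x t + forwardDensity s φ v x t
  calc (tder v x t - lap v x t) ^ 2
      ≤ 2 * (2 * ((ρ₀ * lap u x t) ^ 2 + G x t ^ 2)) + 8 * C₀ ^ 2 * (J / R) :=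
        h_sq.trans (by gcongr; exact add_sq_le)
    _ = 4 * G x t ^ 2 + 4 * ρ₀ ^ 2 * lap u x t ^ 2 + 8 * C₀ ^ 2 / R * J := by ring
    _ ≤ 4 * G x t ^ 2 + 4 * ρ₀ ^ 2 * (d * backwardDensity s φ u x t) + 8 * C₀ ^ 2 / R * J := by
        gcongr
    _ = 4 * G x t ^ 2 + 4 * ρ₀ ^ 2 * d * backwardDensity s φ u x t + 8 * C₀ ^ 2 / R * J := by ring

theorem memLp_backwardSource (h : IsLinearizedMFGPair T C₀ ρ₀ u v F G) (hu : Admissible T u)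
    (hv : Admissible T v) {μ : Measure (Fin d → ℝ)} [SFinite μ] [IsFiniteMeasureOnCompacts μ] :
    MemLp (fun p : (Fin d → ℝ) × ℝ => F p.1 p.2) 2 (slabMeasure T μ) :=
  memLp_of_norm_sub_le ((hu.memLp_tder 2).add (hu.memLp_lap 2))
    ((((hu.memLp 2).norm.add hu.memLp_gradNorm).add (hv.memLp 2).norm).const_mul C₀)
    h.measurable_backwardSource.aestronglyMeasurable (ae_slabMeasure_of_forall h.backward)

theorem memLp_forwardSource (h : IsLinearizedMFGPair T C₀ ρ₀ u v F G) (hu : Admissible T u)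
    (hv : Admissible T v) {μ : Measure (Fin d → ℝ)} [SFinite μ] [IsFiniteMeasureOnCompacts μ] :
    MemLp (fun p : (Fin d → ℝ) × ℝ => G p.1 p.2) 2 (slabMeasure T μ) :=
  memLp_of_norm_sub_le
    (((hv.memLp_tder 2).sub (hv.memLp_lap 2)).sub ((hu.memLp_lap 2).const_mul ρ₀))
    (((((hu.memLp 2).norm.add (hv.memLp 2).norm).add hu.memLp_gradNorm).add
      hv.memLp_gradNorm).const_mul C₀)
    h.measurable_forwardSource.aestronglyMeasurable (ae_slabMeasure_of_forall h.forward)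

end IsLinearizedMFGPair

namespace IsCarlemanWeight

variable {μ : Measure (Fin d → ℝ)} [SFinite μ] [IsFiniteMeasureOnCompacts μ]

theorem weightedIntegrable_forwardDensity (hw : IsCarlemanWeight T m κ φ α) (hs : 0 < s)
    (hv : Admissible T v) : WeightedIntegrable T μ s α (forwardDensity s φ v) := by
  have h_top := hw.weightedIntegrable_one_div_mul (g := fun x t => tder v x t ^ 2 + hess2 v x t)
    hs ((hv.memLp_tder 2).integrable_sq.add (hv.integrable_hess2 (μ := μ)))
  have h_grad := hw.weightedIntegrable_pow_mul hs (hv.integrable_grad2 (μ := μ)) 1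
  have h_val := hw.weightedIntegrable_pow_mul (g := fun x t => v x t ^ 2) hs
    (hv.memLp (μ := μ) 2).integrable_sq 3
  simp only [pow_one] at h_grad
  exact (h_top.add h_grad).add h_val

theorem weightedIntegrable_backwardDensity (hw : IsCarlemanWeight T m κ φ α) (hs : 0 < s)
    (hu : Admissible T u) : WeightedIntegrable T μ s α (backwardDensity s φ u) := by
  have h_top := hw.weightedIntegrable_pow_mul (g := fun x t => tder u x t ^ 2 + hess2 u x t) hs
    ((hu.memLp_tder 2).integrable_sq.add (hu.integrable_hess2 (μ := μ))) 0
  have h_grad := hw.weightedIntegrable_pow_mul hs (hu.integrable_grad2 (μ := μ)) 2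
  have h_val := hw.weightedIntegrable_pow_mul (g := fun x t => u x t ^ 2) hs
    (hu.memLp (μ := μ) 2).integrable_sq 4
  simp only [pow_zero, one_mul] at h_top
  exact (h_top.add h_grad).add h_val

end IsCarlemanWeight


namespace IsLinearizedMFGPair

theorem weightedIntegrable_backwardSource (h : IsLinearizedMFGPair T C₀ ρ₀ u v F G)
    (hw : IsCarlemanWeight T m κ φ α) (hs : 0 < s) (hu : Admissible T u) (hv : Admissible T v) :
    WeightedIntegrable T volume s α (fun x t => s * φ x t * F x t ^ 2) := by
  simpa only [pow_one] using hw.weightedIntegrable_pow_mul (g := fun x t => F x t ^ 2) hs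
    (h.memLp_backwardSource hu hv).integrable_sq 1

theorem weightedIntegrable_forwardSource (h : IsLinearizedMFGPair T C₀ ρ₀ u v F G)
    (hw : IsCarlemanWeight T m κ φ α) (hs : 0 < s) (hu : Admissible T u) (hv : Admissible T v) :
    WeightedIntegrable T volume s α (fun x t => G x t ^ 2) := by
  simpa only [pow_zero, one_mul] using hw.weightedIntegrable_pow_mul (g := fun x t => G x t ^ 2) hs
    (h.memLp_forwardSource hu hv).integrable_sq 0

theorem weightedIntegral_backward_sq_le (h : IsLinearizedMFGPair T C₀ ρ₀ u v F G)
    (hw : IsCarlemanWeight T m κ φ α) (hu : Admissible T u) (hv : Admissible T v) (hs : 0 < s)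
    (hR : 1 ≤ R) (hσ : ∀ x, ∀ t ∈ Ioo 0 T, R ≤ s * φ x t) :
    weightedIntegral T volume s α (fun x t => s * φ x t * (tder u x t + lap u x t) ^ 2) ≤
      2 * weightedIntegral T volume s α (fun x t => s * φ x t * F x t ^ 2) +
        8 * C₀ ^ 2 / R * (weightedIntegral T volume s α (backwardDensity s φ u) +
          weightedIntegral T volume s α (forwardDensity s φ v)) := by
  have h_u := hw.weightedIntegrable_backwardDensity (μ := volume) hs hu
  have h_v := hw.weightedIntegrable_forwardDensity (μ := volume) hs hv
  have h_F := (h.weightedIntegrable_backwardSource hw hs hu hv).const_mul 2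
  have h_uv := (h_u.add h_v).const_mul (8 * C₀ ^ 2 / R)
  rw [← weightedIntegral_add h_u h_v, ← weightedIntegral_const_mul, ← weightedIntegral_const_mul,
    ← weightedIntegral_add h_F h_uv]
  refine weightedIntegral_mono_of_nonneg (h_F.add h_uv) (fun x t ht => ?_)
    fun x t ht => h.backward_sq_le hR ht (hσ x t ht)
  exact mul_nonneg (by linarith [hσ x t ht]) (sq_nonneg _)

theorem weightedIntegral_forward_sq_le (h : IsLinearizedMFGPair T C₀ ρ₀ u v F G)
    (hw : IsCarlemanWeight T m κ φ α) (hu : Admissible T u) (hv : Admissible T v) (hs : 0 < s)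
    (hR : 1 ≤ R) (hσ : ∀ x, ∀ t ∈ Ioo 0 T, R ≤ s * φ x t) :
    weightedIntegral T volume s α (fun x t => (tder v x t - lap v x t) ^ 2) ≤
      4 * weightedIntegral T volume s α (fun x t => G x t ^ 2) +
        4 * ρ₀ ^ 2 * d * weightedIntegral T volume s α (backwardDensity s φ u) +
        8 * C₀ ^ 2 / R * (weightedIntegral T volume s α (backwardDensity s φ u) +
          weightedIntegral T volume s α (forwardDensity s φ v)) := by
  have h_u := hw.weightedIntegrable_backwardDensity (μ := volume) hs hu
  have h_v := hw.weightedIntegrable_forwardDensity (μ := volume) hs hv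
  have h_G := (h.weightedIntegrable_forwardSource hw hs hu hv).const_mul 4
  have h_lap := h_u.const_mul (4 * ρ₀ ^ 2 * d)
  have h_uv := (h_u.add h_v).const_mul (8 * C₀ ^ 2 / R)
  rw [← weightedIntegral_add h_u h_v, ← weightedIntegral_const_mul, ← weightedIntegral_const_mul,
    ← weightedIntegral_const_mul, ← weightedIntegral_add h_G h_lap,
    ← weightedIntegral_add (h_G.add h_lap) h_uv]
  exact weightedIntegral_mono_of_nonneg ((h_G.add h_lap).add h_uv) (fun _ _ _ => sq_nonneg _)
    fun x t ht => h.forward_sq_le hR ht (hσ x t ht)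

theorem weightedIntegral_densities_le (h : IsLinearizedMFGPair T C₀ ρ₀ u v F G)
    (hw : IsCarlemanWeight T m κ φ α) (hu : Admissible T u) (hv : Admissible T v) (hC₁ : 0 ≤ C₁)
    (H1 : ForwardCarlemanEstimate T s₀ C₁ φ α ν) (H2 : BackwardCarlemanEstimate T s₀ C₁ φ α ν)
    (hs : 0 < s) (hs₀ : s₀ ≤ s) (hR : 1 ≤ R) (hσ : ∀ x, ∀ t ∈ Ioo 0 T, R ≤ s * φ x t)
    (hRC : 16 * C₀ ^ 2 * (C₁ * (2 + C₁ * (4 * ρ₀ ^ 2 * d))) ≤ R) :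
    weightedIntegral T volume s α (backwardDensity s φ u) +
        weightedIntegral T volume s α (forwardDensity s φ v) ≤
      2 * C₁ * ((1 + C₁ * (4 * ρ₀ ^ 2 * d)) *
        (2 * weightedIntegral T volume s α (fun x t => s * φ x t * F x t ^ 2) +
          weightedIntegral T ν s α (fun x t => s ^ 4 * φ x t ^ 4 * u x t ^ 2)) +
        (4 * weightedIntegral T volume s α (fun x t => G x t ^ 2) +
          weightedIntegral T ν s α (fun x t => s ^ 3 * φ x t ^ 3 * v x t ^ 2))) := by
  have h_u := H2 u hu s hs₀
  have h_v := H1 v hv s hs₀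
  have h_backward := mul_le_mul_of_nonneg_left
    (h.weightedIntegral_backward_sq_le hw hu hv hs hR hσ) hC₁
  have h_forward := mul_le_mul_of_nonneg_left
    (h.weightedIntegral_forward_sq_le hw hu hv hs hR hσ) hC₁
  refine add_le_of_weak_coupling (δ := 8 * C₀ ^ 2 / R) hC₁ (by positivity) (add_nonneg ?_ ?_)
    (by linarith) (by linarith) ?_
  · exact weightedIntegral_nonneg fun _ _ _ => backwardDensity_nonneg u
  · exact weightedIntegral_nonneg fun x t ht => forwardDensity_nonneg v (by linarith [hσ x t ht])
  · rw [← mul_div_assoc, div_le_iff₀ (by linarith)]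
    linarith

variable [SFinite ν] [IsFiniteMeasureOnCompacts ν]

theorem carleman_estimate_of_le_mul_factor (h : IsLinearizedMFGPair T C₀ ρ₀ u v F G)
    (hw : IsCarlemanWeight T m κ φ α) (hu : Admissible T u) (hv : Admissible T v) (hC₁ : 0 ≤ C₁)
    (H1 : ForwardCarlemanEstimate T s₀ C₁ φ α ν) (H2 : BackwardCarlemanEstimate T s₀ C₁ φ α ν)
    (hs : 0 < s) (hs₀ : s₀ ≤ s) (hR : 1 ≤ R) (hσ : ∀ x, ∀ t ∈ Ioo 0 T, R ≤ s * φ x t)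
    (hRC : 16 * C₀ ^ 2 * (C₁ * (2 + C₁ * (4 * ρ₀ ^ 2 * d))) ≤ R) :
    weightedIntegral T volume s α (fun x t => backwardDensity s φ u x t + forwardDensity s φ v x t)
      ≤ 8 * C₁ * (1 + C₁ * (4 * ρ₀ ^ 2 * d)) *
          weightedIntegral T volume s α (fun x t => s * φ x t * F x t ^ 2 + G x t ^ 2) +
        8 * C₁ * (1 + C₁ * (4 * ρ₀ ^ 2 * d)) * weightedIntegral T ν s α
          (fun x t => s ^ 4 * φ x t ^ 4 * u x t ^ 2 + s ^ 3 * φ x t ^ 3 * v x t ^ 2) := by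
  have h_pos : ∀ x, ∀ t ∈ Ioo 0 T, 0 < s * φ x t := fun x t ht => mul_pos hs (hw.factor_pos ht)
  have h_F : 0 ≤ weightedIntegral T volume s α (fun x t => s * φ x t * F x t ^ 2) :=
    weightedIntegral_nonneg fun x t ht => mul_nonneg (h_pos x t ht).le (sq_nonneg _)
  have h_G : 0 ≤ weightedIntegral T volume s α (fun x t => G x t ^ 2) :=
    weightedIntegral_nonneg fun _ _ _ => sq_nonneg _
  have h_obs_u : 0 ≤ weightedIntegral T ν s α (fun x t => s ^ 4 * φ x t ^ 4 * u x t ^ 2) :=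
    weightedIntegral_nonneg fun _ _ _ => by positivity
  have h_obs_v : 0 ≤ weightedIntegral T ν s α (fun x t => s ^ 3 * φ x t ^ 3 * v x t ^ 2) :=
    weightedIntegral_nonneg fun x t ht => by
      rw [← mul_pow]; exact mul_nonneg (pow_nonneg (h_pos x t ht).le 3) (sq_nonneg _)
  rw [weightedIntegral_add (hw.weightedIntegrable_backwardDensity hs hu)
      (hw.weightedIntegrable_forwardDensity hs hv),
    weightedIntegral_add (h.weightedIntegrable_backwardSource hw hs hu hv)
      (h.weightedIntegrable_forwardSource hw hs hu hv),
    weightedIntegral_add (hw.weightedIntegrable_pow_mul hs (hu.memLp 2).integrable_sq 4)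
      (hw.weightedIntegrable_pow_mul hs (hv.memLp 2).integrable_sq 3)]
  refine (h.weightedIntegral_densities_le hw hu hv hC₁ H1 H2 hs hs₀ hR hσ hRC).trans ?_
  rw [← mul_add, (by ring : 8 * C₁ = 2 * C₁ * 4), mul_assoc (2 * C₁), mul_assoc (2 * C₁)]
  refine mul_le_mul_of_nonneg_left ?_ (by positivity)
  have h_A : 0 ≤ C₁ * (4 * ρ₀ ^ 2 * d) := by positivity
  generalize C₁ * (4 * ρ₀ ^ 2 * d) = A at h_A ⊢
  have h_forward := le_mul_of_one_le_left
    (add_nonneg (mul_nonneg zero_le_four h_G) h_obs_v) (le_add_of_nonneg_right h_A : 1 ≤ 1 + A)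
  linarith [mul_nonneg h_A h_F, mul_nonneg h_A h_obs_u, mul_nonneg h_A h_obs_v]

end IsLinearizedMFGPair

theorem global_carleman_mfg_system_general [SFinite ν] [IsFiniteMeasureOnCompacts ν]
    (hw : IsCarlemanWeight T m κ φ α) (hC₁ : 0 < C₁) (C₀ ρ₀ : ℝ)
    (H1 : ForwardCarlemanEstimate T s₀ C₁ φ α ν) (H2 : BackwardCarlemanEstimate T s₀ C₁ φ α ν) :
    ∃ C > 0, ∃ s₁ ≥ s₀, ∀ s ≥ s₁, ∀ u v F G : (Fin d → ℝ) → ℝ → ℝ,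
      Admissible T u → Admissible T v → IsLinearizedMFGPair T C₀ ρ₀ u v F G →
      weightedIntegral T volume s α
          (fun x t => backwardDensity s φ u x t + forwardDensity s φ v x t) ≤
        C * weightedIntegral T volume s α (fun x t => s * φ x t * F x t ^ 2 + G x t ^ 2) +
        C * weightedIntegral T ν s α
          (fun x t => s ^ 4 * φ x t ^ 4 * u x t ^ 2 + s ^ 3 * φ x t ^ 3 * v x t ^ 2) := by
  set R := max 1 (16 * C₀ ^ 2 * (C₁ * (2 + C₁ * (4 * ρ₀ ^ 2 * d))))
  have hR : 1 ≤ R := le_max_left ..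
  have hm := hw.lowerBound_pos
  refine ⟨8 * C₁ * (1 + C₁ * (4 * ρ₀ ^ 2 * d)), by positivity, max s₀ (R / m), le_max_left ..,
    fun s hs u v F G hu hv h => ?_⟩
  have h_le : R / m ≤ s := (le_max_right ..).trans hs
  have h_pos : 0 < s := (by positivity : 0 < R / m).trans_le h_le
  have hσ : ∀ x, ∀ t ∈ Ioo 0 T, R ≤ s * φ x t := fun x t ht =>
    ((div_le_iff₀ hm).1 h_le).trans (mul_le_mul_of_nonneg_left (hw.lowerBound_le x t ht) h_pos.le)
  exact h.carleman_estimate_of_le_mul_factor hw hu hv hC₁.le H1 H2 h_pos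
    ((le_max_left ..).trans hs) hR hσ (le_max_right ..)

end Estimate

/-- Theorem 3.2: the global Carleman estimate for the linearized mean field game
system, deduced from the single-equation Carleman estimates (H1) for `∂_t − Δ`
and (H2) (with improved powers of `sφ`) for `∂_t + Δ`, by the absorption
argument for large `s`. -/
theorem global_carleman_mfg_system
    (d : ℕ) (hd : 1 ≤ d) (T lam K : ℝ) (hT : 0 < T) (hlam : 0 < lam) (hK : 0 < K)
    (η : (Fin d → ℝ) → ℝ) (hη : ContDiff ℝ 2 η)
    (hη0 : ∀ x, 0 ≤ η x) (hηK : ∀ x, η x ≤ K)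
    (ω : Set (Fin d → ℝ)) (hω : MeasurableSet ω)
    (s₀ C₁ : ℝ) (hs₀ : 0 < s₀) (hC₁ : 0 < C₁) (ρ₀ C₀ : ℝ) (hC₀ : 0 < C₀)
    (φ α : (Fin d → ℝ) → ℝ → ℝ)
    (hφ : ∀ x t, φ x t = Real.exp (lam * η x) / (t * (T - t)))
    (hα : ∀ x t, α x t = (Real.exp (lam * η x) - Real.exp (2 * lam * K)) / (t * (T - t)))
    (H1 : ∀ w : (Fin d → ℝ) → ℝ → ℝ, Admissible T w → ∀ s ≥ s₀,
      (∫ t in Set.Ioo (0:ℝ) T, ∫ x : Fin d → ℝ,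
          ((1 / (s * φ x t)) * ((tder w x t) ^ 2 + hess2 w x t)
            + s * φ x t * grad2 w x t + s ^ 3 * (φ x t) ^ 3 * (w x t) ^ 2)
          * Real.exp (2 * s * α x t))
      ≤ C₁ * (∫ t in Set.Ioo (0:ℝ) T, ∫ x : Fin d → ℝ,
            (tder w x t - lap w x t) ^ 2 * Real.exp (2 * s * α x t))
        + C₁ * (∫ t in Set.Ioo (0:ℝ) T, ∫ x in ω,
            s ^ 3 * (φ x t) ^ 3 * (w x t) ^ 2 * Real.exp (2 * s * α x t)))
    (H2 : ∀ w : (Fin d → ℝ) → ℝ → ℝ, Admissible T w → ∀ s ≥ s₀,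
      (∫ t in Set.Ioo (0:ℝ) T, ∫ x : Fin d → ℝ,
          ((tder w x t) ^ 2 + hess2 w x t
            + s ^ 2 * (φ x t) ^ 2 * grad2 w x t + s ^ 4 * (φ x t) ^ 4 * (w x t) ^ 2)
          * Real.exp (2 * s * α x t))
      ≤ C₁ * (∫ t in Set.Ioo (0:ℝ) T, ∫ x : Fin d → ℝ,
            s * φ x t * (tder w x t + lap w x t) ^ 2 * Real.exp (2 * s * α x t))
        + C₁ * (∫ t in Set.Ioo (0:ℝ) T, ∫ x in ω,
            s ^ 4 * (φ x t) ^ 4 * (w x t) ^ 2 * Real.exp (2 * s * α x t))) :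
    ∃ C > (0:ℝ), ∃ s₁ ≥ s₀, ∀ s ≥ s₁,
      ∀ u v F G : (Fin d → ℝ) → ℝ → ℝ, Admissible T u → Admissible T v →
      Measurable (fun p : (Fin d → ℝ) × ℝ => F p.1 p.2) →
      Measurable (fun p : (Fin d → ℝ) × ℝ => G p.1 p.2) →
      (∀ x : Fin d → ℝ, ∀ t ∈ Set.Ioo (0:ℝ) T,
        |tder u x t + lap u x t - F x t| ≤ C₀ * (|u x t| + gradNorm u x t + |v x t|)) →
      (∀ x : Fin d → ℝ, ∀ t ∈ Set.Ioo (0:ℝ) T,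
        |tder v x t - lap v x t - ρ₀ * lap u x t - G x t| ≤
          C₀ * (|u x t| + |v x t| + gradNorm u x t + gradNorm v x t)) →
      (∫ t in Set.Ioo (0:ℝ) T, ∫ x : Fin d → ℝ,
          ((tder u x t) ^ 2 + hess2 u x t
            + s ^ 2 * (φ x t) ^ 2 * grad2 u x t + s ^ 4 * (φ x t) ^ 4 * (u x t) ^ 2
            + (1 / (s * φ x t)) * ((tder v x t) ^ 2 + hess2 v x t)
            + s * φ x t * grad2 v x t + s ^ 3 * (φ x t) ^ 3 * (v x t) ^ 2)
          * Real.exp (2 * s * α x t))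
      ≤ C * (∫ t in Set.Ioo (0:ℝ) T, ∫ x : Fin d → ℝ,
            (s * φ x t * (F x t) ^ 2 + (G x t) ^ 2) * Real.exp (2 * s * α x t))
        + C * (∫ t in Set.Ioo (0:ℝ) T, ∫ x in ω,
            (s ^ 4 * (φ x t) ^ 4 * (u x t) ^ 2 + s ^ 3 * (φ x t) ^ 3 * (v x t) ^ 2)
              * Real.exp (2 * s * α x t)) := by
  have hw := isCarlemanWeight_exp_div hT hlam hK hη.continuous.measurable hη0 hηK
  obtain rfl : φ = _ := funext₂ hφ
  obtain rfl : α = _ := funext₂ hα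
  obtain ⟨C, hC, s₁, hs₁, h⟩ := global_carleman_mfg_system_general hw hC₁ C₀ ρ₀ H1 H2
  refine ⟨C, hC, s₁, hs₁, fun s hs u v F G hu hv hF hG h_backward h_forward => ?_⟩
  simpa only [weightedIntegral, backwardDensity, forwardDensity, ← add_assoc] using
    h s hs u v F G hu hv ⟨hF, hG, h_backward, h_forward⟩
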